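/- Let G be a simple 2-connected outerplanar graph with k chords, equipped with an r-acyclic orientation, and for i ≥ 2 let s_i be the number of sinks of (undirected) degree i. Then Σ_{i≥2} (i−1)·s_i ≤ k + 1. -/

import Mathlib

/-- `D` is an orientation of the simple graph `G`: every arc of `D` is along an edge of
`G`, and every edge of `G` is directed in exactly one of its two directions. -/
def IsOrientOf {V : Type*} (G : SimpleGraph V) (D : V → V → Prop) : Prop :=
  (∀ u v, D u v → G.Adj u v) ∧ ∀ u v, G.Adj u v → (D u v ↔ ¬ D v u)

/-- `p` is an edge of the outer Hamiltonian cycle `0 − 1 − ⋯ − (n-1) − 0` of `Fin n`. -/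
def IsCycEdge (n : ℕ) [NeZero n] (p : Sym2 (Fin n)) : Prop :=
  ∃ u : Fin n, p = s(u, u + 1)

/-- `{u, v}` is a chord of `G`: an edge that is not an outer-cycle edge. -/
def IsChord {n : ℕ} [NeZero n] (G : SimpleGraph (Fin n)) (u v : Fin n) : Prop :=
  G.Adj u v ∧ ¬ IsCycEdge n s(u, v)

/-- `G` is a 2-connected outerplanar graph presented with its vertices `0, 1, …, n-1`
in order along the outer Hamiltonian cycle: `G` contains all outer-cycle edges, and its
chords are pairwise noncrossing. -/
def OuterHam (n : ℕ) [NeZero n] (G : SimpleGraph (Fin n)) : Prop :=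
  (∀ u : Fin n, G.Adj u (u + 1)) ∧
  ∀ a b c d : Fin n, IsChord G a b → IsChord G c d →
    ¬ (a.val < c.val ∧ c.val < b.val ∧ b.val < d.val)

/-- The set of chords of `G` (as unordered edges). -/
def chordSet (n : ℕ) [NeZero n] (G : SimpleGraph (Fin n)) : Set (Sym2 (Fin n)) :=
  {p | p ∈ G.edgeSet ∧ ¬ IsCycEdge n p}

/-!
Every vertex that is not a source uses up one incoming arc, so the excess in-degrees
`max (indeg v - 1) 0` sum to exactly `|E| - |V| + #sources`. A sink of degree `i` receives all of
its `i` edges and contributes `i - 1` to that sum. With a single source, and with at most `n + k`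
edges because at most `n` of them lie on the outer cycle, the bound is `k + 1`.
-/

open Finset

section Degrees

variable {V : Type*} [Fintype V]

/-- The in-degree of `v` in the digraph on `V` with arc relation `D`. -/
def inDegree (D : V → V → Prop) [DecidableRel D] (v : V) : ℕ :=
  #{u | D u v}

/-- The out-degree of `v` in the digraph on `V` with arc relation `D`. -/
def outDegree (D : V → V → Prop) [DecidableRel D] (v : V) : ℕ :=
  #{u | D v u}

variable (D : V → V → Prop) [DecidableRel D]

theorem inDegree_eq_zero_iff {v : V} : inDegree D v = 0 ↔ ∀ u, ¬ D u v := by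
  simp [inDegree, filter_eq_empty_iff]

theorem outDegree_eq_zero_iff {v : V} : outDegree D v = 0 ↔ ∀ u, ¬ D v u := by
  simp [outDegree, filter_eq_empty_iff]

theorem sum_outDegree_eq_sum_inDegree : ∑ v, outDegree D v = ∑ v, inDegree D v :=
  sum_card_bipartiteAbove_eq_sum_card_bipartiteBelow D

theorem sum_inDegree_sub_one_add_card :
    ∑ v, (inDegree D v - 1) + Fintype.card V =
      ∑ v, inDegree D v + {v | ∀ u, ¬ D u v}.ncard := by
  have pointwise (v : V) :
      inDegree D v - 1 + 1 = inDegree D v + if inDegree D v = 0 then 1 else 0 := by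
    split_ifs <;> omega
  have sources_eq : {v | ∀ u, ¬ D u v} = ({v | inDegree D v = 0} : Finset V) := by
    ext v
    simp [inDegree_eq_zero_iff]
  calc ∑ v, (inDegree D v - 1) + Fintype.card V
      = ∑ v, (inDegree D v - 1 + 1) := by simp [sum_add_distrib]
    _ = ∑ v, (inDegree D v + if inDegree D v = 0 then 1 else 0) :=
      sum_congr rfl fun v _ ↦ pointwise v
    _ = ∑ v, inDegree D v + {v | ∀ u, ¬ D u v}.ncard := by
      rw [sum_add_distrib, ← card_filter, sources_eq, Set.ncard_coe_finset]

end Degrees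

namespace IsOrientOf

variable {V : Type*} {G : SimpleGraph V} {D : V → V → Prop}

theorem adj_iff (hD : IsOrientOf G D) {u v : V} : G.Adj u v ↔ D u v ∨ D v u := by
  refine ⟨fun huv ↦ ?_, fun h ↦ h.elim (hD.1 u v) fun hvu ↦ (hD.1 v u hvu).symm⟩
  rw [hD.2 u v huv]
  exact (em (D v u)).symm

theorem asymm (hD : IsOrientOf G D) {u v : V} (huv : D u v) : ¬ D v u :=
  (hD.2 u v (hD.1 u v huv)).1 huv

variable [Fintype V] [DecidableRel D]

theorem degree_eq_inDegree_add_outDegree [DecidableRel G.Adj] (hD : IsOrientOf G D) (v : V) :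
    G.degree v = inDegree D v + outDegree D v := by
  classical
  have disjoint_in_out : Disjoint (α := Finset V) {u | D u v} {u | D v u} :=
    disjoint_filter.2 fun _ _ ↦ hD.asymm
  rw [← SimpleGraph.card_neighborFinset_eq_degree, inDegree, outDegree,
    ← card_union_of_disjoint disjoint_in_out]
  congr 1
  ext u
  simp only [SimpleGraph.mem_neighborFinset, hD.adj_iff, mem_union, mem_filter_univ, or_comm]

theorem inDegree_eq_degree_of_sink [DecidableRel G.Adj] (hD : IsOrientOf G D) {v : V}
    (hv : ∀ u, ¬ D v u) : inDegree D v = G.degree v := by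
  rw [hD.degree_eq_inDegree_add_outDegree, (outDegree_eq_zero_iff D).2 hv, add_zero]

theorem sum_inDegree_eq_card_edgeFinset [Fintype G.edgeSet] (hD : IsOrientOf G D) :
    ∑ v, inDegree D v = #G.edgeFinset := by
  classical
  have handshake : ∑ v, inDegree D v + ∑ v, outDegree D v = 2 * #G.edgeFinset := by
    simp only [← sum_add_distrib, ← hD.degree_eq_inDegree_add_outDegree]
    convert G.sum_degrees_eq_twice_card_edges
  rw [sum_outDegree_eq_sum_inDegree, ← two_mul] at handshake
  exact Nat.eq_of_mul_eq_mul_left two_pos handshake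

theorem sum_sinks_degree_sub_one_le [DecidableRel G.Adj] (hD : IsOrientOf G D) :
    ∑ v with ∀ u, ¬ D v u, (G.degree v - 1) ≤ ∑ v, (inDegree D v - 1) :=
  calc ∑ v with ∀ u, ¬ D v u, (G.degree v - 1)
      = ∑ v with ∀ u, ¬ D v u, (inDegree D v - 1) :=
        sum_congr rfl fun v hv ↦ by
          rw [hD.inDegree_eq_degree_of_sink ((mem_filter_univ v).1 hv)]
    _ ≤ ∑ v, (inDegree D v - 1) := sum_le_sum_of_subset (subset_univ _)

end IsOrientOf

theorem sum_ncard_fiber_nsmul {α ι M : Type*} [Fintype α] [AddCommMonoid M]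
    {p : α → Prop} [DecidablePred p] {f : α → ι} {t : Finset ι} (hf : ∀ a, p a → f a ∈ t)
    (g : ι → M) :
    ∑ i ∈ t, {a | p a ∧ f a = i}.ncard • g i = ∑ a with p a, g (f a) := by
  classical
  have fiber_eq (i : ι) :
      {a | p a ∧ f a = i} = (({a | p a} : Finset α).filter (f · = i) : Finset α) := by
    ext a
    simp
  rw [← sum_fiberwise_of_maps_to' fun a ha ↦ hf a ((mem_filter_univ a).1 ha)]
  refine sum_congr rfl fun i _ ↦ ?_
  rw [fiber_eq, Set.ncard_coe_finset, sum_const]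

theorem ncard_setOf_isCycEdge_le (n : ℕ) [NeZero n] : {p | IsCycEdge n p}.ncard ≤ n := by
  have cycEdges_eq : {p | IsCycEdge n p} = (fun u : Fin n ↦ s(u, u + 1)) '' Set.univ := by
    ext p
    simp [IsCycEdge, eq_comm]
  simpa [cycEdges_eq, Set.ncard_univ] using
    Set.ncard_image_le (f := fun u : Fin n ↦ s(u, u + 1)) Set.finite_univ

theorem card_edgeFinset_le_ncard_chordSet_add {n : ℕ} [NeZero n] (G : SimpleGraph (Fin n))
    [Fintype G.edgeSet] : #G.edgeFinset ≤ (chordSet n G).ncard + n := by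
  have edgeSet_subset : G.edgeSet ⊆ chordSet n G ∪ {p | IsCycEdge n p} := fun p hp ↦
    (em (IsCycEdge n p)).elim .inr fun hc ↦ .inl ⟨hp, hc⟩
  calc #G.edgeFinset = G.edgeSet.ncard := by rw [← Set.ncard_coe_finset, G.coe_edgeFinset]
    _ ≤ (chordSet n G ∪ {p | IsCycEdge n p}).ncard := Set.ncard_le_ncard edgeSet_subset
    _ ≤ (chordSet n G).ncard + {p | IsCycEdge n p}.ncard := Set.ncard_union_le _ _
    _ ≤ (chordSet n G).ncard + n := by grw [ncard_setOf_isCycEdge_le]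

theorem stmt_13_general {V : Type*} [Fintype V] {G : SimpleGraph V} [DecidableRel G.Adj]
    [Fintype G.edgeSet] {D : V → V → Prop} (hD : IsOrientOf G D) :
    ∑ i ∈ range (Fintype.card V + 1),
        (i - 1) * {v | (∀ u, ¬ D v u) ∧ G.degree v = i}.ncard + Fintype.card V ≤
      #G.edgeFinset + {v | ∀ u, ¬ D u v}.ncard := by
  classical
  have degree_mem (v : V) (_ : ∀ u, ¬ D v u) : G.degree v ∈ range (Fintype.card V + 1) :=
    mem_range.2 <| (G.degree_lt_card_verts v).trans (Nat.lt_succ_self _)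
  calc ∑ i ∈ range (Fintype.card V + 1),
          (i - 1) * {v | (∀ u, ¬ D v u) ∧ G.degree v = i}.ncard + Fintype.card V
      = ∑ v with ∀ u, ¬ D v u, (G.degree v - 1) + Fintype.card V := by
        rw [← sum_ncard_fiber_nsmul degree_mem (· - 1)]
        simp only [smul_eq_mul, mul_comm]
    _ ≤ ∑ v, (inDegree D v - 1) + Fintype.card V := by grw [hD.sum_sinks_degree_sub_one_le]
    _ = #G.edgeFinset + {v | ∀ u, ¬ D u v}.ncard := by
      rw [sum_inDegree_sub_one_add_card, hD.sum_inDegree_eq_card_edgeFinset]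

/-- Let `G` be a simple 2-connected outerplanar graph with `k` chords,
equipped with an `r`-acyclic orientation `D`, and for each `i` let `s_i` be the number
of sinks of (undirected) degree `i`. Then `∑_{i≥2} (i − 1) · s_i ≤ k + 1`. (Degrees in
`G` are at most `n - 1 < n + 1`, so the sum below captures all sinks.) -/
theorem stmt_13 {n : ℕ} [NeZero n] (hn : 3 ≤ n) (G : SimpleGraph (Fin n))
    [DecidableRel G.Adj] (hG : OuterHam n G) (D : Fin n → Fin n → Prop)
    (hO : IsOrientOf G D)
    (hacyc : ∀ v, ¬ Relation.TransGen D v v) (r : Fin n)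
    (hroot : (∀ u, ¬ D u r) ∧ ∀ v, (∀ u, ¬ D u v) → v = r) :
    ∑ i ∈ Finset.range (n + 1),
        (i - 1) * {v : Fin n | (∀ u, ¬ D v u) ∧ G.degree v = i}.ncard ≤
      (chordSet n G).ncard + 1 := by
  have sources_le_one : {v | ∀ u, ¬ D u v}.ncard ≤ 1 :=
    Set.ncard_le_one_iff_subsingleton.2 fun u hu v hv ↦ (hroot.2 _ hu).trans (hroot.2 _ hv).symm
  have sinks_le := Fintype.card_fin n ▸ stmt_13_general hO
  linarith [card_edgeFinset_le_ncard_chordSet_add G]
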